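/- Let k be a field of characteristic p, let q = p^e with e ≥ 1, let n ≥ 2, and let V_n be the k-subspace of k[x_0,…,x_{n−1}] spanned by the monomials x_i^q·x_j for 0 ≤ i, j ≤ n−1. Suppose f ∈ V_n is nonzero and ℓ is a linear form such that ℓ^2 divides f. Then there exists a linear form u such that f = ℓ^q·u; in particular f lies in the orbit under linear changes of variables of x_0^q·x_1 (if u is not proportional to ℓ) or of x_0^{q+1} (if u is proportional to ℓ). -/

import Mathlib

/-!
Since `q = 0` in `k`, every derivation treats the `x_i ^ q` as constants. Hence each `∂f/∂x_j` is a
linear combination of the `x_i ^ q`, the Euler derivation fixes `f`, so `f = ∑ j, ∂f/∂x_j * x_j`,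
and `ℓ ^ 2 ∣ f` gives `ℓ ∣ ∂f/∂x_j`.

Choose `m` such that `x_m` occurs in `ℓ`, with coefficient `b`, and let `φ` be the substitution
`x_m ↦ x_m - ℓ / b`. Raising to the `q`-th power is additive, so
`φ g = g - (g_m / b ^ q) * ℓ ^ q` for every `g = ∑ i, g_i * x_i ^ q`. For `q = 1` and `g = ℓ` this
reads `φ ℓ = 0`, so if `ℓ ∣ g` then `φ g = 0` and `g` is a scalar multiple of `ℓ ^ q`. Taking
`g = ∂f/∂x_j` for each `j` exhibits `ℓ ^ q` as a factor of `f` with a linear cofactor.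
-/

open MvPolynomial

section Derivation

theorem pow_dvd_derivation_of_pow_succ_dvd {R A : Type*} [CommSemiring R] [CommSemiring A]
    [Algebra R A] (D : Derivation R A A) {a b : A} {n : ℕ} (h : a ^ (n + 1) ∣ b) :
    a ^ n ∣ D b := by
  obtain ⟨c, rfl⟩ := h
  rw [D.leibniz, D.leibniz_pow, Nat.add_sub_cancel, nsmul_eq_mul]
  simp only [smul_eq_mul]
  exact dvd_add ((pow_dvd_pow a n.le_succ).mul_right _)
    (((dvd_mul_right _ _).mul_left _).mul_left _)

theorem derivation_sum_apply {ι R A M : Type*} [CommSemiring R] [CommSemiring A] [AddCommMonoid M]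
    [Algebra R A] [Module A M] [Module R M] (s : Finset ι) (D : ι → Derivation R A M) (a : A) :
    (∑ i ∈ s, D i) a = ∑ i ∈ s, D i a := by
  rw [← Derivation.coeFnAddMonoidHom_apply, map_sum, Finset.sum_apply]
  rfl

theorem derivation_eq_sum_vars_pderiv_smul {σ R M : Type*} [CommSemiring R] [AddCommMonoid M]
    [Module R M] [Module (MvPolynomial σ R) M] [IsScalarTower R (MvPolynomial σ R) M]
    (D : Derivation R (MvPolynomial σ R) M) (f : MvPolynomial σ R) :
    D f = ∑ i ∈ f.vars, pderiv i f • D (X i) := by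
  classical
  let E : Derivation R (MvPolynomial σ R) M :=
    ∑ i ∈ f.vars, (LinearMap.toSpanSingleton (MvPolynomial σ R) M (D (X i))).compDer (pderiv i)
  have hE (g : MvPolynomial σ R) : E g = ∑ i ∈ f.vars, pderiv i g • D (X i) := by
    simp [E, derivation_sum_apply]
  rw [← hE]
  refine derivation_eq_of_forall_mem_vars fun j hj => ?_
  simp [hE, pderiv_X, Pi.single_apply, hj]

end Derivation

section Forms

variable (σ R : Type*) [CommSemiring R] (q : ℕ)

/-- The diagonal forms `∑ i, a_i x_i ^ q` of degree `q`; for `q = 1` these are the linear forms. -/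
noncomputable def diagonalForms : Submodule R (MvPolynomial σ R) :=
  Submodule.span R (Set.range fun i => X i ^ q)

/-- The Frobenius forms `∑ i j, a_ij x_i ^ q x_j`, i.e. the space `V_n` of the paper when
`σ = Fin n`; the terminology is meant for `q` a power of the characteristic of `R`. -/
noncomputable def frobeniusForms : Submodule R (MvPolynomial σ R) :=
  Submodule.span R {g | ∃ i j : σ, g = X i ^ q * X j}

variable {σ R q}

theorem mem_diagonalForms_one_iff {f : MvPolynomial σ R} :
    f ∈ diagonalForms σ R 1 ↔ f.IsHomogeneous 1 := by
  rw [← mem_homogeneousSubmodule, homogeneousSubmodule_one_eq_span_X]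
  simp only [diagonalForms, pow_one]

theorem exists_coeff_single_one_ne_zero {f : MvPolynomial σ R} (hf : f.IsHomogeneous 1)
    (hf0 : f ≠ 0) : ∃ m, coeff (Finsupp.single m 1) f ≠ 0 := by
  obtain ⟨d, hd⟩ := ne_zero_iff.mp hf0
  have hdeg : d.degree = 1 := by
    rw [Finsupp.degree_eq_weight_one]
    exact hf hd
  obtain ⟨m, rfl⟩ : d ∈ Set.range fun m => Finsupp.single m 1 := by
    rwa [Finsupp.range_single_one]
  exact ⟨m, hd⟩

theorem derivation_X_pow_mul_X {M : Type*} [AddCommMonoid M] [Module R M]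
    [Module (MvPolynomial σ R) M] (D : Derivation R (MvPolynomial σ R) M) (hq : (q : R) = 0)
    (i j : σ) : D (X i ^ q * X j) = (X i ^ q : MvPolynomial σ R) • D (X j) := by
  have hqA : (q : MvPolynomial σ R) = 0 := by rw [← map_natCast C, hq, map_zero]
  rw [D.leibniz, D.leibniz_pow, ← Nat.cast_smul_eq_nsmul (MvPolynomial σ R), hqA, zero_smul,
    smul_zero, add_zero]

theorem pderiv_mem_diagonalForms (hq : (q : R) = 0) {f : MvPolynomial σ R}
    (hf : f ∈ frobeniusForms σ R q) (j : σ) : pderiv j f ∈ diagonalForms σ R q := by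
  classical
  induction hf using Submodule.span_induction with
  | mem f hf =>
    obtain ⟨i, l, rfl⟩ := hf
    rw [derivation_X_pow_mul_X _ hq, pderiv_X, Pi.single_apply]
    split_ifs
    · rw [smul_eq_mul, mul_one]
      exact Submodule.subset_span (Set.mem_range_self i)
    · simp
  | zero => simp
  | add f g _ _ hf hg => simpa using add_mem hf hg
  | smul a f _ hf => simpa using Submodule.smul_mem _ a hf

theorem mkDerivation_X_eq_self_of_mem_frobeniusForms (hq : (q : R) = 0) {f : MvPolynomial σ R}
    (hf : f ∈ frobeniusForms σ R q) : mkDerivation R X f = f := by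
  induction hf using Submodule.span_induction with
  | mem f hf =>
    obtain ⟨i, j, rfl⟩ := hf
    rw [derivation_X_pow_mul_X _ hq, mkDerivation_X, smul_eq_mul]
  | zero => exact map_zero _
  | add f g _ _ hf hg => rw [map_add, hf, hg]
  | smul a f _ hf => rw [Derivation.map_smul, hf]

theorem sum_vars_pderiv_mul_X_of_mem_frobeniusForms (hq : (q : R) = 0) {f : MvPolynomial σ R}
    (hf : f ∈ frobeniusForms σ R q) : ∑ j ∈ f.vars, pderiv j f * X j = f := by
  calc
    ∑ j ∈ f.vars, pderiv j f * X j = mkDerivation R X f := by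
      simp only [derivation_eq_sum_vars_pderiv_smul (mkDerivation R X) f, mkDerivation_X,
        smul_eq_mul]
    _ = f := mkDerivation_X_eq_self_of_mem_frobeniusForms hq hf

end Forms

section Elimination

variable {σ k : Type*} [Field k] [DecidableEq σ] {p : ℕ} {ℓ g : MvPolynomial σ k}

/-- The substitution `x_m ↦ x_m - ℓ / b`, where `b` is the coefficient of `x_m` in `ℓ`. When `ℓ` is
a linear form and `b ≠ 0`, it projects onto the polynomials not involving `x_m` and kills `ℓ`;
when `b = 0` it is the identity, since `0⁻¹ = 0`. -/
noncomputable def eliminateVar (ℓ : MvPolynomial σ k) (m : σ) :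
    MvPolynomial σ k →ₐ[k] MvPolynomial σ k :=
  aeval (X - Pi.single m (C (coeff (Finsupp.single m 1) ℓ)⁻¹ * ℓ))

theorem eliminateVar_of_mem_diagonalForms [ExpChar k p] (e : ℕ) (ℓ : MvPolynomial σ k) (m : σ)
    (hg : g ∈ diagonalForms σ k (p ^ e)) :
    eliminateVar ℓ m g = g - C (coeff (Finsupp.single m (p ^ e)) g *
      (coeff (Finsupp.single m 1) ℓ)⁻¹ ^ p ^ e) * ℓ ^ p ^ e := by
  have hq : p ^ e ≠ 0 := pow_ne_zero e (expChar_ne_zero k p)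
  induction hg using Submodule.span_induction with
  | mem g hg =>
    obtain ⟨i, rfl⟩ := hg
    obtain rfl | hi := eq_or_ne i m
    · simp [eliminateVar, sub_pow_expChar_pow, mul_pow, coeff_X_pow, ← C_pow]
    · simp [eliminateVar, hi, coeff_X_pow, Finsupp.single_left_inj hq]
  | zero => simp
  | add f g _ _ hf hg =>
    simp only [map_add, coeff_add, hf, hg, add_mul]
    ring
  | smul a g _ hg =>
    rw [map_smul, hg, coeff_smul, smul_sub, smul_eq_mul, mul_assoc, C_mul (a := a),
      mul_assoc (C a), C_mul' (a := a)]

theorem eliminateVar_self (hℓ : ℓ.IsHomogeneous 1) {m : σ}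
    (hm : coeff (Finsupp.single m 1) ℓ ≠ 0) : eliminateVar ℓ m ℓ = 0 := by
  obtain ⟨p, _⟩ := ExpChar.exists k
  have h := eliminateVar_of_mem_diagonalForms (p := p) 0 ℓ m (g := ℓ)
    (by simpa using mem_diagonalForms_one_iff.2 hℓ)
  simpa [hm] using h

end Elimination

section Divisibility

variable {σ k : Type*} [Field k] {p e : ℕ} {ℓ f g : MvPolynomial σ k}

theorem exists_eq_C_mul_pow_of_dvd_of_mem_diagonalForms [ExpChar k p]
    (hℓ : ℓ.IsHomogeneous 1) (hℓ0 : ℓ ≠ 0) (hg : g ∈ diagonalForms σ k (p ^ e)) (hdvd : ℓ ∣ g) :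
    ∃ c : k, g = C c * ℓ ^ p ^ e := by
  classical
  obtain ⟨m, hm⟩ := exists_coeff_single_one_ne_zero hℓ hℓ0
  have hg0 : eliminateVar ℓ m g = 0 := by
    simpa [eliminateVar_self hℓ hm] using map_dvd (eliminateVar ℓ m) hdvd
  rw [eliminateVar_of_mem_diagonalForms e ℓ m hg, sub_eq_zero] at hg0
  exact ⟨_, hg0⟩

theorem double_linear_factor_implies_exceptional_form_general
    [CharP k p] (hp : p.Prime) (he : e ≠ 0) (hf : f ∈ frobeniusForms σ k (p ^ e)) (hf0 : f ≠ 0)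
    (hℓ : ℓ.IsHomogeneous 1) (hdvd : ℓ ^ 2 ∣ f) :
    ∃ u : MvPolynomial σ k, u.IsHomogeneous 1 ∧ u ≠ 0 ∧ f = ℓ ^ p ^ e * u := by
  have : ExpChar k p := .prime hp
  have hq : ((p ^ e : ℕ) : k) = 0 := by simp [he]
  have hℓ0 : ℓ ≠ 0 := by
    rintro rfl
    exact hf0 (by simpa using hdvd)
  have hpderiv (j : σ) : ∃ c : k, pderiv j f = C c * ℓ ^ p ^ e :=
    exists_eq_C_mul_pow_of_dvd_of_mem_diagonalForms hℓ hℓ0 (pderiv_mem_diagonalForms hq hf j)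
      (by simpa using pow_dvd_derivation_of_pow_succ_dvd (pderiv j) hdvd)
  choose c hc using hpderiv
  have hfu : f = ℓ ^ p ^ e * ∑ j ∈ f.vars, C (c j) * X j := by
    calc
      f = ∑ j ∈ f.vars, C (c j) * ℓ ^ p ^ e * X j := by
        simpa only [hc] using (sum_vars_pderiv_mul_X_of_mem_frobeniusForms hq hf).symm
      _ = ℓ ^ p ^ e * ∑ j ∈ f.vars, C (c j) * X j := by
        simp only [Finset.mul_sum, mul_assoc, mul_left_comm]
  exact ⟨_, .sum _ _ _ fun j _ => (isHomogeneous_X k j).C_mul (c j),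
    right_ne_zero_of_mul (hfu ▸ hf0), hfu⟩

end Divisibility

/-- A nonzero polynomial in `V_n = span {x_i^q x_j}` divisible by the square of a linear form `ℓ`
is of the form `ℓ^q u` for some linear form `u`. -/
theorem double_linear_factor_implies_exceptional_form
    (p : ℕ) (hp : p.Prime) (e : ℕ) (he : 1 ≤ e) (q : ℕ) (hq : q = p ^ e)
    (k : Type) [Field k] [CharP k p] (n : ℕ) (hn : 2 ≤ n)
    (f : MvPolynomial (Fin n) k)
    (hf : f ∈ Submodule.span k
      {g : MvPolynomial (Fin n) k | ∃ i j : Fin n, g = X i ^ q * X j})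
    (hf0 : f ≠ 0)
    (ℓ : MvPolynomial (Fin n) k) (hhom : ℓ.IsHomogeneous 1) (hℓ0 : ℓ ≠ 0)
    (hdvd : ℓ ^ 2 ∣ f) :
    ∃ u : MvPolynomial (Fin n) k, u.IsHomogeneous 1 ∧ u ≠ 0 ∧ f = ℓ ^ q * u := by
  subst hq
  exact double_linear_factor_implies_exceptional_form_general hp (Nat.one_le_iff_ne_zero.mp he)
    hf hf0 hhom hdvd
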